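/- Let p > 0, ρ > 0, and let x† = f_p(T*T)w with ‖w‖ ≤ ρ. There exist C > 0 and δ̄ ∈ (0,1) such that the following holds for every δ ∈ (0,δ̄]: if y^δ ∈ Y satisfies ‖y^δ − T x†‖ ≤ δ and α > 0 is such that ‖T x_α^δ − y^δ‖ ≤ δ + √δ while ‖T x_{α'}^δ − y^δ‖ > δ + √δ for every α' > α (i.e., α is the supremum in the Morozov-like discrepancy rule α(δ,y^δ) = sup{α > 0 : ‖T x_α^δ − y^δ‖ ≤ δ + √δ}), where x_β^δ = g_β(T*T)T*y^δ, then ‖x† − x_α^δ‖ ≤ C·(−ln δ)^{−p}. -/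

import Mathlib

open ContinuousLinearMap

/-- The generator function `g_α(λ) = 1/(λ + (1 − λ^{√α})²)` with `g_α(0) = 1`,
where `λ^{√α} = exp(√α · log λ)`. -/
noncomputable def genFun (α : ℝ) : ℝ → ℝ := fun t =>
  if t = 0 then 1 else 1 / (t + (1 - Real.exp (Real.sqrt α * Real.log t)) ^ 2)

/-- `f_p(λ) = (−log λ)^{−p}` (with `f_p(0) = 0`). -/
noncomputable def fpFun (p : ℝ) : ℝ → ℝ := fun t => (-Real.log t) ^ (-p)

/-!
Put `A = T*T`, `r_α = 1 - λ g_α` and `e = y^δ - T x†`; then `x† - x_α^δ = r_α(A) x† - g_α(A) T* e`.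

Approximation error: accepting `α` gives `‖T r_α(A) x†‖ ≤ 2 δ + √δ ≤ 3 √δ`. As
`r_α(A) x† = f_p(A) r_α(A) w` with `‖r_α(A) w‖ ≤ ρ`, splitting the spectrum of `A` at `√δ` turns
this into `‖r_α(A) x†‖ ≤ ρ f_p(√δ) + 3 δ^(1/4)`, and `f_p(√δ) = 2^p f_p(δ)`.

Noise error: rejecting `4 α` gives `√δ ≤ ‖T r_{4α}(A) x†‖ ≤ 2 (4 α)^(1/3) ρ`, because
`√λ r_α(λ) ≤ 2 α^(1/3)`. Hence `√α` is at least a multiple of `δ^(3/4)`, and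
`√λ g_α(λ) ≤ (1 + α^(-1/2)) / 2` makes the noise error `O(δ^(1/4))`, which is
`O((-log δ)^(-p))` for every `p`.
-/

open Set

section SpectralCalculus

variable {X Y : Type*} [NormedAddCommGroup X] [InnerProductSpace ℂ X] [CompleteSpace X]
  [NormedAddCommGroup Y] [InnerProductSpace ℂ Y] [CompleteSpace Y] {T : X →L[ℂ] Y} {h : ℝ → ℝ}

lemma isSelfAdjoint_adjoint_comp_self (T : X →L[ℂ] Y) : IsSelfAdjoint (adjoint T ∘L T) :=
  (isPositive_adjoint_comp_self T).isSelfAdjoint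

lemma spectrum_adjoint_comp_self_subset_Icc {M : ℝ} (hT : ‖adjoint T ∘L T‖ ≤ M) :
    spectrum ℝ (adjoint T ∘L T) ⊆ Icc 0 M := by
  intro t ht
  have hpos : (0 : X →L[ℂ] X) ≤ adjoint T ∘L T :=
    (nonneg_iff_isPositive _).2 (isPositive_adjoint_comp_self T)
  refine ⟨spectrum_nonneg_of_nonneg hpos ht, (le_abs_self t).trans ?_⟩
  calc |t| ≤ ‖adjoint T ∘L T‖ * ‖(1 : X →L[ℂ] X)‖ := spectrum.norm_le_norm_mul_of_mem ht
    _ ≤ ‖adjoint T ∘L T‖ := mul_le_of_le_one_right (norm_nonneg _) norm_id_le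
    _ ≤ M := hT

lemma adjoint_cfc (h : ℝ → ℝ) (A : X →L[ℂ] X) : adjoint (cfc h A) = cfc h A :=
  (cfc_predicate h A : IsSelfAdjoint (cfc h A)).adjoint_eq

lemma adjoint_cfc_comp_cfc {A : X →L[ℂ] X} (hh : ContinuousOn h (spectrum ℝ A)) :
    adjoint (cfc h A) ∘L cfc h A = cfc (fun t ↦ h t ^ 2) A := by
  simp only [sq]
  rw [adjoint_cfc, cfc_mul h h A]
  rfl

lemma adjoint_comp_cfc_comp_self (hh : ContinuousOn h (spectrum ℝ (adjoint T ∘L T))) :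
    adjoint (T ∘L cfc h (adjoint T ∘L T)) ∘L (T ∘L cfc h (adjoint T ∘L T)) =
      cfc (fun t ↦ t * h t ^ 2) (adjoint T ∘L T) := by
  set A := adjoint T ∘L T
  calc adjoint (T ∘L cfc h A) ∘L (T ∘L cfc h A) = cfc h A * (A * cfc h A) := by
        rw [adjoint_comp, adjoint_cfc]; rfl
    _ = cfc (fun t ↦ h t * (t * h t)) A := by
        rw [cfc_mul h (fun t ↦ t * h t) A, cfc_mul (fun t ↦ t) h A,
          cfc_id' ℝ A (isSelfAdjoint_adjoint_comp_self T)]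
    _ = cfc (fun t ↦ t * h t ^ 2) A := by congr 1; funext t; ring

lemma norm_comp_cfc_le {M : ℝ} (hM : 0 ≤ M)
    (hh : ContinuousOn h (spectrum ℝ (adjoint T ∘L T)))
    (hle : ∀ t ∈ spectrum ℝ (adjoint T ∘L T), t * h t ^ 2 ≤ M ^ 2) :
    ‖T ∘L cfc h (adjoint T ∘L T)‖ ≤ M := by
  refine le_of_sq_le_sq ?_ hM
  rw [sq, ← norm_adjoint_comp_self, adjoint_comp_cfc_comp_self hh]
  refine norm_cfc_le (sq_nonneg M) fun t ht ↦ ?_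
  have ht0 : 0 ≤ t := (spectrum_adjoint_comp_self_subset_Icc le_rfl ht).1
  rw [Real.norm_of_nonneg (by positivity)]
  exact hle t ht

lemma norm_cfc_adjoint_apply_le {M : ℝ} (hM : 0 ≤ M)
    (hh : ContinuousOn h (spectrum ℝ (adjoint T ∘L T)))
    (hle : ∀ t ∈ spectrum ℝ (adjoint T ∘L T), t * h t ^ 2 ≤ M ^ 2) (y : Y) :
    ‖cfc h (adjoint T ∘L T) (adjoint T y)‖ ≤ M * ‖y‖ := by
  have hadj : cfc h (adjoint T ∘L T) ∘L adjoint T = adjoint (T ∘L cfc h (adjoint T ∘L T)) := by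
    rw [adjoint_comp, adjoint_cfc]
  refine le_of_opNorm_le (cfc h (adjoint T ∘L T) ∘L adjoint T) ?_ y
  rw [hadj, LinearIsometryEquiv.norm_map]
  exact norm_comp_cfc_le hM hh hle

lemma norm_cfc_apply_sq_le {a b : ℝ} (hh : ContinuousOn h (spectrum ℝ (adjoint T ∘L T)))
    (hle : ∀ t ∈ spectrum ℝ (adjoint T ∘L T), h t ^ 2 ≤ a + b * (t * h t ^ 2)) (v : X) :
    ‖cfc h (adjoint T ∘L T) v‖ ^ 2 ≤
      a * ‖v‖ ^ 2 + b * ‖T (cfc h (adjoint T ∘L T) v)‖ ^ 2 := by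
  set A := adjoint T ∘L T
  have hmono : cfc (fun t ↦ h t ^ 2) A ≤ a • 1 + b • cfc (fun t ↦ t * h t ^ 2) A := by
    rw [← cfc_const_mul b (fun t ↦ t * h t ^ 2) A, ← Algebra.algebraMap_eq_smul_one,
      ← cfc_const a A (isSelfAdjoint_adjoint_comp_self T), ← cfc_add ..]
    exact cfc_mono hle
  have hre := ((le_def _ _).1 hmono).re_inner_nonneg_left v
  have hsq := apply_norm_sq_eq_inner_adjoint_left (cfc h A) v
  have hTsq := apply_norm_sq_eq_inner_adjoint_left (T ∘L cfc h A) v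
  rw [adjoint_cfc_comp_cfc hh] at hsq
  rw [adjoint_comp_cfc_comp_self hh, comp_apply] at hTsq
  have hnorm : ‖v‖ ^ 2 = RCLike.re (inner ℂ v v) := (inner_self_eq_norm_sq v).symm
  rw [hsq, hTsq, hnorm]
  simp only [sub_apply, add_apply, smul_apply, one_apply_eq_self, inner_sub_left, inner_add_left,
    inner_smul_left_eq_smul, map_sub, map_add, RCLike.smul_re] at hre
  linarith

lemma cfc_apply_cfc_apply_comm (f g : ℝ → ℝ) (A : X →L[ℂ] X) (v : X) :
    cfc f A (cfc g A v) = cfc g A (cfc f A v) :=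
  DFunLike.congr_fun (cfc_commute_cfc f g A).eq v

end SpectralCalculus

section LogIndexFunction

variable {p t : ℝ}

lemma fpFun_zero (hp : 0 < p) : fpFun p 0 = 0 := by
  simp [fpFun, Real.zero_rpow (neg_ne_zero.2 hp.ne')]

lemma fpFun_exp_neg_one (p : ℝ) : fpFun p (Real.exp (-1)) = 1 := by
  simp [fpFun]

lemma fpFun_nonneg (ht : t ∈ Icc (0 : ℝ) 1) : 0 ≤ fpFun p t :=
  Real.rpow_nonneg (neg_nonneg.2 (Real.log_nonpos ht.1 ht.2)) _

lemma fpFun_monotoneOn (hp : 0 < p) : MonotoneOn (fpFun p) (Ico 0 1) := by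
  intro t ht τ hτ htτ
  rcases ht.1.eq_or_lt with rfl | ht0
  · rw [fpFun_zero hp]
    exact fpFun_nonneg (Ico_subset_Icc_self hτ)
  · exact Real.rpow_le_rpow_of_nonpos (neg_pos.2 (Real.log_neg (ht0.trans_le htτ) hτ.2))
      (neg_le_neg (Real.log_le_log ht0 htτ)) (neg_nonpos.2 hp.le)

lemma fpFun_continuousOn (hp : 0 < p) : ContinuousOn (fpFun p) (Ico 0 1) := by
  refine fun t ht ↦ ContinuousAt.continuousWithinAt ?_
  rcases ht.1.eq_or_lt with rfl | ht0
  · rw [← continuousWithinAt_compl_self, ContinuousWithinAt, fpFun_zero hp]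
    exact (tendsto_rpow_neg_atTop hp).comp
      (Filter.tendsto_neg_atBot_atTop.comp Real.tendsto_log_nhdsNE_zero)
  · exact (Real.continuousAt_log ht0.ne').neg.rpow_const
      (Or.inl (neg_pos.2 (Real.log_neg ht0 ht.2)).ne')

lemma fpFun_sqrt (p : ℝ) (ht : t ∈ Icc (0 : ℝ) 1) : fpFun p √t = 2 ^ p * fpFun p t := by
  have hlog : 0 ≤ -Real.log t := neg_nonneg.2 (Real.log_nonpos ht.1 ht.2)
  rw [fpFun, fpFun, Real.log_sqrt ht.1, ← neg_div, Real.div_rpow hlog zero_le_two,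
    Real.rpow_neg zero_le_two, div_inv_eq_mul, mul_comm]

lemma rpow_le_mul_fpFun {s : ℝ} (hp : 0 < p) (hs : 0 < s) (ht : t ∈ Ioo (0 : ℝ) 1) :
    t ^ s ≤ (p / s) ^ p * fpFun p t := by
  have hlog : 0 < -Real.log t := neg_pos.2 (Real.log_neg ht.1 ht.2)
  have hlt : -Real.log t * t ^ (s / p) ≤ p / s := by
    have := (abs_lt.1 (Real.abs_log_mul_self_rpow_lt t (s / p) ht.1 ht.2.le (by positivity))).1
    rw [one_div_div] at this
    linarith
  have hpow := Real.rpow_le_rpow (by have := ht.1; positivity) hlt hp.le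
  rw [Real.mul_rpow hlog.le (Real.rpow_nonneg ht.1.le _), ← Real.rpow_mul ht.1.le,
    div_mul_cancel₀ _ hp.ne'] at hpow
  rwa [fpFun, Real.rpow_neg hlog.le, ← div_eq_mul_inv, le_div_iff₀' (by positivity)]

lemma fpFun_sq_le_add {τ : ℝ} (hp : 0 < p) (ht : t ∈ Ico (0 : ℝ) 1) (hτ : τ ∈ Ioo (0 : ℝ) 1) :
    fpFun p t ^ 2 ≤ fpFun p τ ^ 2 + τ⁻¹ * (t * fpFun p t ^ 2) := by
  have hτ0 := hτ.1
  have ht0 := ht.1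
  rcases le_total t τ with htτ | hτt
  · have hmono : fpFun p t ^ 2 ≤ fpFun p τ ^ 2 :=
      pow_le_pow_left₀ (fpFun_nonneg (Ico_subset_Icc_self ht))
        (fpFun_monotoneOn hp ht (Ioo_subset_Ico_self hτ) htτ) 2
    exact hmono.trans (le_add_of_nonneg_right (by positivity))
  · have hone : 1 ≤ τ⁻¹ * t := by rwa [← div_eq_inv_mul, one_le_div hτ0]
    calc fpFun p t ^ 2 ≤ τ⁻¹ * t * fpFun p t ^ 2 := le_mul_of_one_le_left (sq_nonneg _) hone
      _ = τ⁻¹ * (t * fpFun p t ^ 2) := mul_assoc ..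
      _ ≤ _ := le_add_of_nonneg_left (sq_nonneg _)

end LogIndexFunction

/-- The residual `r = 1 - t g(t)` of a filter `g`: the regularized solution `g(T*T) T* T x` misses
`x` by `r(T*T) x`. -/
def filterResidual (g : ℝ → ℝ) (t : ℝ) : ℝ := 1 - t * g t

/-- A spectral filter on `s`, the generator of a linear regularization method: a continuous
nonnegative approximation `g` of `t ↦ t⁻¹` from below. -/
structure IsSpectralFilter (g : ℝ → ℝ) (s : Set ℝ) : Prop where
  continuousOn : ContinuousOn g s
  nonneg : ∀ t ∈ s, 0 ≤ g t
  mul_le_one : ∀ t ∈ s, t * g t ≤ 1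

namespace IsSpectralFilter

variable {g : ℝ → ℝ} {s s' : Set ℝ}

lemma mono (hg : IsSpectralFilter g s) (hs : s' ⊆ s) : IsSpectralFilter g s' :=
  ⟨hg.continuousOn.mono hs, fun t ht ↦ hg.nonneg t (hs ht), fun t ht ↦ hg.mul_le_one t (hs ht)⟩

lemma continuousOn_residual (hg : IsSpectralFilter g s) : ContinuousOn (filterResidual g) s :=
  continuousOn_const.sub (continuousOn_id.mul hg.continuousOn)

lemma abs_residual_le_one (hg : IsSpectralFilter g s) (hs : s ⊆ Ici 0) {t : ℝ} (ht : t ∈ s) :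
    |filterResidual g t| ≤ 1 := by
  have hmul : 0 ≤ t * g t := mul_nonneg (hs ht) (hg.nonneg t ht)
  rw [filterResidual, abs_of_nonneg (sub_nonneg.2 (hg.mul_le_one t ht))]
  exact sub_le_self 1 hmul

end IsSpectralFilter

section Generator

variable {α b t : ℝ}

lemma genFun_eq_rpow (hα : 0 < α) (ht : 0 ≤ t) :
    genFun α t = (t + (1 - t ^ √α) ^ 2)⁻¹ := by
  rcases ht.eq_or_lt with rfl | ht0
  · simp [genFun, Real.zero_rpow (Real.sqrt_pos.2 hα).ne']
  · rw [genFun, if_neg ht0.ne', one_div, Real.rpow_def_of_pos ht0, mul_comm (√α)]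

lemma add_one_sub_rpow_sq_pos (hb : 0 < b) (ht : 0 ≤ t) : 0 < t + (1 - t ^ b) ^ 2 := by
  rcases ht.eq_or_lt with rfl | ht0
  · simp [Real.zero_rpow hb.ne']
  · positivity

lemma isSpectralFilter_genFun (hα : 0 < α) : IsSpectralFilter (genFun α) (Ici 0) where
  continuousOn := by
    have hb := Real.sqrt_pos.2 hα
    refine ContinuousOn.congr ?_ fun t ht ↦ genFun_eq_rpow hα ht
    refine ContinuousOn.inv₀ (Continuous.continuousOn ?_) fun t ht ↦
      (add_one_sub_rpow_sq_pos hb ht).ne'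
    exact continuous_id.add ((continuous_const.sub (Real.continuous_rpow_const hb.le)).pow 2)
  nonneg t ht := by
    rw [genFun_eq_rpow hα ht]
    exact (inv_pos.2 (add_one_sub_rpow_sq_pos (Real.sqrt_pos.2 hα) ht)).le
  mul_le_one t ht := by
    rw [genFun_eq_rpow hα ht, ← div_eq_mul_inv]
    exact div_le_one_of_le₀ (le_add_of_nonneg_right (sq_nonneg _))
      (add_one_sub_rpow_sq_pos (Real.sqrt_pos.2 hα) ht).le

lemma filterResidual_genFun (hα : 0 < α) (ht : 0 ≤ t) :
    filterResidual (genFun α) t = (1 - t ^ √α) ^ 2 / (t + (1 - t ^ √α) ^ 2) := by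
  have hpos := add_one_sub_rpow_sq_pos (Real.sqrt_pos.2 hα) ht
  rw [filterResidual, genFun_eq_rpow hα ht]
  field_simp
  ring

lemma mul_inv_add_sq_le {u : ℝ} (ht : 0 ≤ t) (hu : 0 < u) :
    t * (t + u)⁻¹ ^ 2 ≤ (4 * u)⁻¹ := by
  rw [inv_pow, ← div_eq_mul_inv, ← one_div, div_le_div_iff₀ (by positivity) (by positivity)]
  nlinarith [sq_nonneg (t - u)]

lemma mul_div_add_sq_le_left {u : ℝ} (ht : 0 ≤ t) (hu : 0 ≤ u) : t * (u / (t + u)) ^ 2 ≤ t :=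
  mul_le_of_le_one_right ht <|
    pow_le_one₀ (by positivity) (div_le_one_of_le₀ (by linarith) (by positivity))

lemma mul_div_add_sq_le_right {u : ℝ} (ht : 0 ≤ t) (hu : 0 ≤ u) :
    t * (u / (t + u)) ^ 2 ≤ u / 4 := by
  rcases hu.eq_or_lt with rfl | hu0
  · simp
  calc t * (u / (t + u)) ^ 2 = t * (t + u)⁻¹ ^ 2 * u ^ 2 := by ring
    _ ≤ (4 * u)⁻¹ * u ^ 2 := by gcongr; exact mul_inv_add_sq_le ht hu0
    _ = u / 4 := by field_simp

lemma mul_one_sub_rpow_pow_four_le (hb : 0 ≤ b) (ht : t ∈ Icc (0 : ℝ) 1) :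
    t * (1 - t ^ b) ^ 4 ≤ 256 * b ^ 4 := by
  rcases ht.1.eq_or_lt with rfl | ht0
  · rw [zero_mul]; positivity
  have hsub : 1 - t ^ b ≤ b * -Real.log t := by
    have := Real.add_one_le_exp (b * Real.log t)
    rw [mul_comm, ← Real.rpow_def_of_pos ht0] at this
    linarith
  have hlog : -Real.log t * t ^ (1 / 4 : ℝ) ≤ 4 := by
    have := (abs_lt.1 (Real.abs_log_mul_self_rpow_lt t (1 / 4) ht0 ht.2 (by norm_num))).1
    rw [one_div_one_div] at this
    linarith
  have hroot : (t ^ (1 / 4 : ℝ)) ^ 4 = t := by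
    rw [← Real.rpow_mul_natCast ht.1]; norm_num
  have hnonneg : 0 ≤ 1 - t ^ b := sub_nonneg.2 (Real.rpow_le_one ht.1 ht.2 hb)
  calc t * (1 - t ^ b) ^ 4 = (t ^ (1 / 4 : ℝ) * (1 - t ^ b)) ^ 4 := by rw [mul_pow, hroot]
    _ ≤ (t ^ (1 / 4 : ℝ) * (b * -Real.log t)) ^ 4 := by gcongr
    _ = (b * (-Real.log t * t ^ (1 / 4 : ℝ))) ^ 4 := by ring
    _ ≤ (b * 4) ^ 4 := by
        have : 0 ≤ -Real.log t := neg_nonneg.2 (Real.log_nonpos ht.1 ht.2)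
        gcongr
    _ = 256 * b ^ 4 := by ring

lemma mul_filterResidual_genFun_sq_le (hα : 0 < α) (ht : t ∈ Icc (0 : ℝ) 1) :
    t * filterResidual (genFun α) t ^ 2 ≤ (2 * α ^ (1 / 3 : ℝ)) ^ 2 := by
  rw [filterResidual_genFun hα ht.1]
  set u := (1 - t ^ √α) ^ 2 with hu
  have ht0 := ht.1
  have hu0 : 0 ≤ u := sq_nonneg _
  have hleft : t * (u / (t + u)) ^ 2 ≤ t := mul_div_add_sq_le_left ht0 hu0
  have hright : t * (u / (t + u)) ^ 2 ≤ u / 4 := mul_div_add_sq_le_right ht0 hu0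
  have hu4 : t * u ^ 2 ≤ 256 * α ^ 2 := by
    have := mul_one_sub_rpow_pow_four_le (Real.sqrt_nonneg α) ht
    rwa [show (√α) ^ 4 = (√α ^ 2) ^ 2 by ring, Real.sq_sqrt hα.le,
      show (1 - t ^ √α) ^ 4 = u ^ 2 by rw [hu]; ring] at this
  have hroot : (α ^ (1 / 3 : ℝ)) ^ 3 = α := by
    rw [← Real.rpow_mul_natCast hα.le]; norm_num
  refine le_of_pow_le_pow_left₀ (n := 3) (by norm_num) (by positivity) ?_
  calc (t * (u / (t + u)) ^ 2) ^ 3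
      = t * (u / (t + u)) ^ 2 * (t * (u / (t + u)) ^ 2) ^ 2 := by ring
    _ ≤ t * (u / 4) ^ 2 := by gcongr
    _ = t * u ^ 2 / 16 := by ring
    _ ≤ 64 * α ^ 2 := by linarith [sq_nonneg α]
    _ = ((2 * α ^ (1 / 3 : ℝ)) ^ 2) ^ 3 := by nth_rw 1 [← hroot]; ring

lemma inv_one_sub_rpow_le (hb : 0 < b) (ht : t ∈ Icc 0 (Real.exp (-1))) :
    (1 - t ^ b)⁻¹ ≤ 1 + b⁻¹ := by
  have hle : t ^ b ≤ (1 + b)⁻¹ := by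
    calc t ^ b ≤ Real.exp (-1) ^ b := Real.rpow_le_rpow ht.1 ht.2 hb.le
      _ = (Real.exp b)⁻¹ := by rw [← Real.exp_mul, neg_one_mul, Real.exp_neg]
      _ ≤ (1 + b)⁻¹ := by gcongr; linarith [Real.add_one_le_exp b]
  calc (1 - t ^ b)⁻¹ ≤ (1 - (1 + b)⁻¹)⁻¹ := by
        gcongr
        exact sub_pos.2 (inv_lt_one_of_one_lt₀ (by linarith))
    _ = 1 + b⁻¹ := by
        have hsub : 1 - (1 + b)⁻¹ = b / (1 + b) := by field_simp; ring
        rw [hsub, inv_div, add_div, div_self hb.ne', one_div, add_comm]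

lemma mul_genFun_sq_le (hα : 0 < α) (ht : t ∈ Icc 0 (Real.exp (-1))) :
    t * genFun α t ^ 2 ≤ ((1 + (√α)⁻¹) / 2) ^ 2 := by
  have hb := Real.sqrt_pos.2 hα
  have hpos : 0 < 1 - t ^ √α :=
    sub_pos.2 (Real.rpow_lt_one ht.1 (ht.2.trans_lt (by simp)) hb)
  calc t * genFun α t ^ 2 = t * (t + (1 - t ^ √α) ^ 2)⁻¹ ^ 2 := by rw [genFun_eq_rpow hα ht.1]
    _ ≤ (4 * (1 - t ^ √α) ^ 2)⁻¹ := mul_inv_add_sq_le ht.1 (by positivity)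
    _ = ((1 - t ^ √α)⁻¹ / 2) ^ 2 := by field_simp; norm_num
    _ ≤ ((1 + (√α)⁻¹) / 2) ^ 2 := by
        gcongr
        exact inv_one_sub_rpow_le hb ht

end Generator

section Regularization

variable {X Y : Type*} [NormedAddCommGroup X] [InnerProductSpace ℂ X] [CompleteSpace X]
  [NormedAddCommGroup Y] [InnerProductSpace ℂ Y] [CompleteSpace Y] {T : X →L[ℂ] Y} {g : ℝ → ℝ}

/-- The solution `g(T*T) T* y` of `T x = y` regularized by the filter `g`; for `g = genFun α` and
data `y^δ` this is `x_α^δ`. -/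
noncomputable def regularized (T : X →L[ℂ] Y) (g : ℝ → ℝ) (y : Y) : X :=
  cfc g (adjoint T ∘L T) (adjoint T y)

lemma regularized_sub (T : X →L[ℂ] Y) (g : ℝ → ℝ) (y z : Y) :
    regularized T g (y - z) = regularized T g y - regularized T g z := by
  simp only [regularized, map_sub]

lemma sub_regularized_apply (hg : ContinuousOn g (spectrum ℝ (adjoint T ∘L T))) (x : X) :
    x - regularized T g (T x) = cfc (filterResidual g) (adjoint T ∘L T) x := by
  set A := adjoint T ∘L T
  have hA : IsSelfAdjoint A := isSelfAdjoint_adjoint_comp_self T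
  have hmul : cfc (fun t ↦ t * g t) A = cfc g A * A := by
    simp only [mul_comm _ (g _)]
    rw [cfc_mul g (fun t ↦ t) A, cfc_id' ℝ A hA]
  unfold filterResidual
  rw [cfc_sub (fun _ ↦ 1) (fun t ↦ t * g t) A, cfc_const_one ℝ A hA, hmul]
  rfl

lemma sub_regularized (hg : ContinuousOn g (spectrum ℝ (adjoint T ∘L T))) (x : X) (y : Y) :
    x - regularized T g y =
      cfc (filterResidual g) (adjoint T ∘L T) x - regularized T g (y - T x) := by
  rw [← sub_regularized_apply hg, regularized_sub]
  abel

lemma apply_regularized_sub (hg : ContinuousOn g (spectrum ℝ (adjoint T ∘L T))) (x : X) (y : Y) :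
    T (regularized T g y) - y =
      T (regularized T g (y - T x)) - (y - T x) -
        T (cfc (filterResidual g) (adjoint T ∘L T) x) := by
  rw [← sub_regularized_apply hg, regularized_sub, map_sub, map_sub]
  abel

-- `T g(T*T) T* = S S*` with `S = T √g(T*T)`, so it lies between `0` and `1`, and so does
-- `1 - S S*`.
lemma norm_apply_regularized_sub_le (hg : IsSpectralFilter g (spectrum ℝ (adjoint T ∘L T)))
    (y : Y) : ‖T (regularized T g y) - y‖ ≤ ‖y‖ := by
  set A := adjoint T ∘L T
  have hsqrt : ContinuousOn (fun t ↦ √(g t)) (spectrum ℝ A) := hg.continuousOn.sqrt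
  set S := T ∘L cfc (fun t ↦ √(g t)) A with hS
  have hSS : S ∘L adjoint S = T ∘L cfc g A ∘L adjoint T := by
    have hmul : cfc g A = cfc (fun t ↦ √(g t)) A * cfc (fun t ↦ √(g t)) A := by
      rw [← cfc_mul _ _ A]
      exact cfc_congr fun t ht ↦ (Real.mul_self_sqrt (hg.nonneg t ht)).symm
    rw [hmul, hS, adjoint_comp, adjoint_cfc]
    rfl
  have hnorm : ‖S‖ ≤ 1 := norm_comp_cfc_le zero_le_one hsqrt fun t ht ↦ by
    rw [Real.sq_sqrt (hg.nonneg t ht), one_pow]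
    exact hg.mul_le_one t ht
  have hpos : 0 ≤ S ∘L adjoint S := (nonneg_iff_isPositive _).2 (isPositive_self_comp_adjoint S)
  have hle : S ∘L adjoint S ≤ 1 := by
    refine (CStarAlgebra.norm_le_one_iff_of_nonneg _ hpos).1 ?_
    calc ‖S ∘L adjoint S‖ ≤ ‖S‖ * ‖adjoint S‖ := opNorm_comp_le _ _
      _ ≤ 1 := by rw [LinearIsometryEquiv.norm_map]; exact mul_le_one₀ hnorm (norm_nonneg _) hnorm
  have hcontr : ‖1 - S ∘L adjoint S‖ ≤ 1 :=
    (CStarAlgebra.norm_le_one_iff_of_nonneg _ (sub_nonneg.2 hle)).2 (sub_le_self 1 hpos)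
  calc ‖T (regularized T g y) - y‖ = ‖(1 - S ∘L adjoint S) y‖ := by rw [norm_sub_rev, hSS]; rfl
    _ ≤ 1 * ‖y‖ := le_of_opNorm_le _ hcontr y
    _ = ‖y‖ := one_mul _

lemma norm_apply_residual_le (hg : IsSpectralFilter g (spectrum ℝ (adjoint T ∘L T)))
    (x : X) (y : Y) :
    ‖T (cfc (filterResidual g) (adjoint T ∘L T) x)‖ ≤
      ‖y - T x‖ + ‖T (regularized T g y) - y‖ := by
  calc ‖T (cfc (filterResidual g) (adjoint T ∘L T) x)‖
      = ‖(T (regularized T g (y - T x)) - (y - T x)) - (T (regularized T g y) - y)‖ := by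
        rw [apply_regularized_sub hg.continuousOn x y, sub_sub_cancel]
    _ ≤ _ := norm_sub_le_of_le (norm_apply_regularized_sub_le hg _) le_rfl

lemma norm_apply_regularized_sub_le_add
    (hg : IsSpectralFilter g (spectrum ℝ (adjoint T ∘L T))) (x : X) (y : Y) :
    ‖T (regularized T g y) - y‖ ≤
      ‖y - T x‖ + ‖T (cfc (filterResidual g) (adjoint T ∘L T) x)‖ := by
  rw [apply_regularized_sub hg.continuousOn x y]
  exact norm_sub_le_of_le (norm_apply_regularized_sub_le hg _) le_rfl

lemma norm_cfc_residual_apply_le (hg : IsSpectralFilter g (spectrum ℝ (adjoint T ∘L T))) (v : X) :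
    ‖cfc (filterResidual g) (adjoint T ∘L T) v‖ ≤ ‖v‖ := by
  have hle : ‖cfc (filterResidual g) (adjoint T ∘L T)‖ ≤ 1 := norm_cfc_le zero_le_one fun t ht ↦
    hg.abs_residual_le_one (fun _ hs ↦ (spectrum_adjoint_comp_self_subset_Icc le_rfl hs).1) ht
  simpa only [one_mul] using le_of_opNorm_le _ hle v

end Regularization

section LogarithmicSource

variable {X Y : Type*} [NormedAddCommGroup X] [InnerProductSpace ℂ X] [CompleteSpace X]
  [NormedAddCommGroup Y] [InnerProductSpace ℂ Y] [CompleteSpace Y] {T : X →L[ℂ] Y} {g : ℝ → ℝ}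
  {p ρ δ : ℝ}

lemma norm_cfc_fpFun_apply_le (hT : ‖adjoint T ∘L T‖ ≤ Real.exp (-1)) (hp : 0 < p) (v : X) :
    ‖cfc (fpFun p) (adjoint T ∘L T) v‖ ≤ ‖v‖ := by
  have hexp : Real.exp (-1) < 1 := by simp
  have hle : ‖cfc (fpFun p) (adjoint T ∘L T)‖ ≤ 1 := norm_cfc_le zero_le_one fun t ht ↦ by
    obtain ⟨ht0, ht1⟩ := spectrum_adjoint_comp_self_subset_Icc hT ht
    rw [Real.norm_of_nonneg (fpFun_nonneg ⟨ht0, ht1.trans hexp.le⟩), ← fpFun_exp_neg_one p]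
    exact fpFun_monotoneOn hp ⟨ht0, ht1.trans_lt hexp⟩ ⟨(Real.exp_pos _).le, hexp⟩ ht1
  simpa only [one_mul] using le_of_opNorm_le _ hle v

lemma norm_cfc_fpFun_apply_le_add {τ : ℝ} (hT : ‖adjoint T ∘L T‖ < 1) (hp : 0 < p)
    (hτ : τ ∈ Ioo (0 : ℝ) 1) (v : X) :
    ‖cfc (fpFun p) (adjoint T ∘L T) v‖ ≤
      fpFun p τ * ‖v‖ + ‖T (cfc (fpFun p) (adjoint T ∘L T) v)‖ / √τ := by
  have hspec : spectrum ℝ (adjoint T ∘L T) ⊆ Ico 0 1 :=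
    (spectrum_adjoint_comp_self_subset_Icc le_rfl).trans (Icc_subset_Ico_right hT)
  have hsq := norm_cfc_apply_sq_le ((fpFun_continuousOn hp).mono hspec)
    (fun t ht ↦ fpFun_sq_le_add hp (hspec ht) hτ) v
  have hf : 0 ≤ fpFun p τ * ‖v‖ :=
    mul_nonneg (fpFun_nonneg (Ioo_subset_Icc_self hτ)) (norm_nonneg v)
  have hN : 0 ≤ ‖T (cfc (fpFun p) (adjoint T ∘L T) v)‖ / √τ := by positivity
  refine le_of_sq_le_sq (hsq.trans ?_) (add_nonneg hf hN)
  rw [add_sq, mul_pow, div_pow, Real.sq_sqrt hτ.1.le, ← div_eq_inv_mul]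
  linarith [mul_nonneg hf hN]

lemma norm_cfc_residual_cfc_fpFun_apply_le (hT : ‖adjoint T ∘L T‖ < 1) (hp : 0 < p)
    (hg : IsSpectralFilter g (spectrum ℝ (adjoint T ∘L T))) {w : X} (hw : ‖w‖ ≤ ρ)
    (hδ : δ ∈ Ioo (0 : ℝ) 1) {y : Y}
    (hy : ‖y - T (cfc (fpFun p) (adjoint T ∘L T) w)‖ ≤ δ)
    (hres : ‖T (regularized T g y) - y‖ ≤ δ + √δ) :
    ‖cfc (filterResidual g) (adjoint T ∘L T) (cfc (fpFun p) (adjoint T ∘L T) w)‖ ≤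
      2 ^ p * ρ * fpFun p δ + 3 * δ ^ (1 / 4 : ℝ) := by
  have hδ_sqrt : δ ≤ √δ := Real.le_sqrt_of_sq_le (by nlinarith [hδ.1, hδ.2])
  have hsqrt : √δ ∈ Ioo (0 : ℝ) 1 :=
    ⟨Real.sqrt_pos.2 hδ.1, (Real.sqrt_lt' one_pos).2 (by simpa using hδ.2)⟩
  have himage := norm_apply_residual_le hg (cfc (fpFun p) (adjoint T ∘L T) w) y
  rw [cfc_apply_cfc_apply_comm] at himage ⊢
  have hstab := norm_cfc_fpFun_apply_le_add hT hp hsqrt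
    (cfc (filterResidual g) (adjoint T ∘L T) w)
  have hquarter : √√δ = δ ^ (1 / 4 : ℝ) := by
    rw [Real.sqrt_eq_rpow, Real.sqrt_eq_rpow, ← Real.rpow_mul hδ.1.le]; norm_num
  refine hstab.trans (add_le_add ?_ ?_)
  · rw [fpFun_sqrt p (Ioo_subset_Icc_self hδ), mul_right_comm]
    have hf : 0 ≤ fpFun p δ := fpFun_nonneg (Ioo_subset_Icc_self hδ)
    gcongr
    exact (norm_cfc_residual_apply_le hg w).trans hw
  · calc _ ≤ 3 * √δ / √√δ := by gcongr; linarith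
      _ = 3 * δ ^ (1 / 4 : ℝ) := by rw [mul_div_assoc, Real.div_sqrt, hquarter]

end LogarithmicSource

section Discrepancy

variable {X Y : Type*} [NormedAddCommGroup X] [InnerProductSpace ℂ X] [CompleteSpace X]
  [NormedAddCommGroup Y] [InnerProductSpace ℂ Y] [CompleteSpace Y] {T : X →L[ℂ] Y}
  {ρ δ α : ℝ}

lemma isSpectralFilter_genFun_spectrum (T : X →L[ℂ] Y) (hα : 0 < α) :
    IsSpectralFilter (genFun α) (spectrum ℝ (adjoint T ∘L T)) :=
  (isSpectralFilter_genFun hα).mono fun _ ht ↦ (spectrum_adjoint_comp_self_subset_Icc le_rfl ht).1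

lemma norm_comp_cfc_residual_genFun_le (hT : ‖adjoint T ∘L T‖ ≤ 1) (hα : 0 < α) :
    ‖T ∘L cfc (filterResidual (genFun α)) (adjoint T ∘L T)‖ ≤ 2 * α ^ (1 / 3 : ℝ) :=
  norm_comp_cfc_le (by positivity) (isSpectralFilter_genFun_spectrum T hα).continuousOn_residual
    fun _ ht ↦ mul_filterResidual_genFun_sq_le hα (spectrum_adjoint_comp_self_subset_Icc hT ht)

lemma norm_regularized_genFun_le (hT : ‖adjoint T ∘L T‖ ≤ Real.exp (-1)) (hα : 0 < α) (y : Y) :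
    ‖regularized T (genFun α) y‖ ≤ (1 + (√α)⁻¹) / 2 * ‖y‖ :=
  norm_cfc_adjoint_apply_le (by positivity) (isSpectralFilter_genFun_spectrum T hα).continuousOn
    (fun _ ht ↦ mul_genFun_sq_le hα (spectrum_adjoint_comp_self_subset_Icc hT ht)) y

lemma rpow_le_of_discrepancy_lt (hT : ‖adjoint T ∘L T‖ ≤ 1) (hα : 0 < α) (hδ : 0 ≤ δ)
    {x : X} (hx : ‖x‖ ≤ ρ) {y : Y} (hy : ‖y - T x‖ ≤ δ)
    (hres : δ + √δ < ‖T (regularized T (genFun α) y) - y‖) :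
    δ ^ (3 / 4 : ℝ) ≤ (2 * ρ) ^ (3 / 2 : ℝ) * √α := by
  have hρ : 0 ≤ ρ := (norm_nonneg x).trans hx
  have himage : √δ ≤ 2 * ρ * α ^ (1 / 3 : ℝ) := by
    calc √δ ≤ ‖T (cfc (filterResidual (genFun α)) (adjoint T ∘L T) x)‖ := by
          have := norm_apply_regularized_sub_le_add (isSpectralFilter_genFun_spectrum T hα) x y
          linarith
      _ ≤ 2 * α ^ (1 / 3 : ℝ) * ‖x‖ :=
          le_of_opNorm_le _ (norm_comp_cfc_residual_genFun_le hT hα) x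
      _ ≤ 2 * α ^ (1 / 3 : ℝ) * ρ := by gcongr
      _ = 2 * ρ * α ^ (1 / 3 : ℝ) := by ring
  calc δ ^ (3 / 4 : ℝ) = √δ ^ (3 / 2 : ℝ) := by
        rw [Real.sqrt_eq_rpow, ← Real.rpow_mul hδ]; norm_num
    _ ≤ (2 * ρ * α ^ (1 / 3 : ℝ)) ^ (3 / 2 : ℝ) := by gcongr
    _ = (2 * ρ) ^ (3 / 2 : ℝ) * √α := by
        rw [Real.mul_rpow (by positivity) (by positivity), ← Real.rpow_mul hα.le,
          Real.sqrt_eq_rpow]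
        norm_num

-- The rejected parameter is taken as `4 * α` because `√(4 * α) = 2 * √α` is the denominator in the
-- noise bound `(1 + (√α)⁻¹) / 2 * δ = δ / 2 + δ / (2 * √α)`.
lemma norm_regularized_genFun_le_of_discrepancy_lt (hT : ‖adjoint T ∘L T‖ ≤ Real.exp (-1))
    (hα : 0 < α) (hδ : δ ∈ Ioo (0 : ℝ) 1) {x : X} (hx : ‖x‖ ≤ ρ) {y : Y} (hy : ‖y - T x‖ ≤ δ)
    (hres : δ + √δ < ‖T (regularized T (genFun (4 * α)) y) - y‖) :
    ‖regularized T (genFun α) (y - T x)‖ ≤ (1 + (2 * ρ) ^ (3 / 2 : ℝ)) * δ ^ (1 / 4 : ℝ) := by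
  have hδ0 := hδ.1
  have hlower : δ ^ (3 / 4 : ℝ) ≤ (2 * ρ) ^ (3 / 2 : ℝ) * (2 * √α) := by
    have := rpow_le_of_discrepancy_lt (hT.trans (by simp)) (by positivity) hδ0.le hx hy hres
    rwa [Real.sqrt_mul (by norm_num), show √(4 : ℝ) = 2 by
      rw [Real.sqrt_eq_iff_mul_self_eq] <;> norm_num] at this
  have hsplit : δ = δ ^ (1 / 4 : ℝ) * δ ^ (3 / 4 : ℝ) := by
    rw [← Real.rpow_add hδ0]; norm_num
  have hquarter : δ ≤ δ ^ (1 / 4 : ℝ) := by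
    simpa using Real.rpow_le_rpow_of_exponent_ge hδ0 hδ.2.le (by norm_num : (1 / 4 : ℝ) ≤ 1)
  have hnoise : δ / (2 * √α) ≤ (2 * ρ) ^ (3 / 2 : ℝ) * δ ^ (1 / 4 : ℝ) := by
    rw [div_le_iff₀ (by positivity)]
    nth_rw 1 [hsplit]
    calc _ ≤ δ ^ (1 / 4 : ℝ) * ((2 * ρ) ^ (3 / 2 : ℝ) * (2 * √α)) := by gcongr
      _ = _ := by ring
  calc ‖regularized T (genFun α) (y - T x)‖
      ≤ (1 + (√α)⁻¹) / 2 * δ :=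
        (norm_regularized_genFun_le hT hα _).trans (by gcongr)
    _ = δ / 2 + δ / (2 * √α) := by ring
    _ ≤ (1 + (2 * ρ) ^ (3 / 2 : ℝ)) * δ ^ (1 / 4 : ℝ) := by linarith

theorem stmt11_general (p ρ : ℝ) (hp : 0 < p) (hρ : 0 ≤ ρ) :
    ∃ C > (0 : ℝ), ∀ T : X →L[ℂ] Y, ‖adjoint T ∘L T‖ ≤ Real.exp (-1) →
      ∀ w : X, ‖w‖ ≤ ρ → ∀ δ ∈ Ioo (0 : ℝ) 1, ∀ y : Y,
      ‖y - T (cfc (fpFun p) (adjoint T ∘L T) w)‖ ≤ δ → ∀ α > (0 : ℝ),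
        ‖T (regularized T (genFun α) y) - y‖ ≤ δ + √δ →
        δ + √δ < ‖T (regularized T (genFun (4 * α)) y) - y‖ →
        ‖cfc (fpFun p) (adjoint T ∘L T) w - regularized T (genFun α) y‖ ≤ C * fpFun p δ := by
  refine ⟨2 ^ p * ρ + (4 + (2 * ρ) ^ (3 / 2 : ℝ)) * (p / (1 / 4)) ^ p, by positivity, ?_⟩
  intro T hT w hw δ hδ y hy α hα hle hgt
  have hg := isSpectralFilter_genFun_spectrum T hα
  have happrox := norm_cfc_residual_cfc_fpFun_apply_le (hT.trans_lt (by simp)) hp hg hw hδ hy hle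
  have hnoise := norm_regularized_genFun_le_of_discrepancy_lt hT hα hδ
    ((norm_cfc_fpFun_apply_le hT hp w).trans hw) hy hgt
  have hrate : δ ^ (1 / 4 : ℝ) ≤ (p / (1 / 4)) ^ p * fpFun p δ :=
    rpow_le_mul_fpFun hp (by norm_num) hδ
  rw [sub_regularized hg.continuousOn]
  calc _ ≤ 2 ^ p * ρ * fpFun p δ + 3 * δ ^ (1 / 4 : ℝ) +
        (1 + (2 * ρ) ^ (3 / 2 : ℝ)) * δ ^ (1 / 4 : ℝ) := norm_sub_le_of_le happrox hnoise
    _ = 2 ^ p * ρ * fpFun p δ + (4 + (2 * ρ) ^ (3 / 2 : ℝ)) * δ ^ (1 / 4 : ℝ) := by ring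
    _ ≤ 2 ^ p * ρ * fpFun p δ +
        (4 + (2 * ρ) ^ (3 / 2 : ℝ)) * ((p / (1 / 4)) ^ p * fpFun p δ) := by gcongr
    _ = _ := by ring

end Discrepancy

/-- Let `p > 0`, `ρ > 0`, and `x† = f_p(T*T)w` with `‖w‖ ≤ ρ`, where `T` is a bounded
injective operator between complex Hilbert spaces with `‖T*T‖ ≤ e⁻¹`. There exist
`C > 0` and `δ̄ ∈ (0,1)` such that for every `δ ∈ (0,δ̄]`: if `y^δ` satisfies
`‖y^δ − T x†‖ ≤ δ` and `α > 0` is such that `‖T x_α^δ − y^δ‖ ≤ δ + √δ` while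
`‖T x_{α'}^δ − y^δ‖ > δ + √δ` for every `α' > α` (i.e. `α` is the supremum in the
Morozov-like discrepancy rule), where `x_β^δ = g_β(T*T)T*y^δ`, then
`‖x† − x_α^δ‖ ≤ C·(−log δ)^{−p}`. -/
theorem stmt11 {X Y : Type*} [NormedAddCommGroup X] [InnerProductSpace ℂ X]
    [CompleteSpace X] [NormedAddCommGroup Y] [InnerProductSpace ℂ Y] [CompleteSpace Y]
    (T : X →L[ℂ] Y) (hTinj : Function.Injective T)
    (hTnorm : ‖(adjoint T) ∘L T‖ ≤ Real.exp (-1))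
    (p ρ : ℝ) (hp : 0 < p) (hρ : 0 < ρ)
    (w : X) (hw : ‖w‖ ≤ ρ) (xdag : X) (hxdag : xdag = cfc (fpFun p) ((adjoint T) ∘L T) w) :
    ∃ C > (0 : ℝ), ∃ δbar ∈ Set.Ioo (0 : ℝ) 1, ∀ δ ∈ Set.Ioc (0 : ℝ) δbar, ∀ yδ : Y,
      ‖yδ - T xdag‖ ≤ δ → ∀ α > (0 : ℝ),
        ‖T (cfc (genFun α) ((adjoint T) ∘L T) ((adjoint T) yδ)) - yδ‖ ≤ δ + Real.sqrt δ →
        (∀ α' > α,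
          ‖T (cfc (genFun α') ((adjoint T) ∘L T) ((adjoint T) yδ)) - yδ‖ > δ + Real.sqrt δ) →
        ‖xdag - cfc (genFun α) ((adjoint T) ∘L T) ((adjoint T) yδ)‖ ≤
          C * (-Real.log δ) ^ (-p) := by
  obtain ⟨C, hC, hbound⟩ := stmt11_general (X := X) (Y := Y) p ρ hp hρ.le
  subst hxdag
  exact ⟨C, hC, 1 / 2, by norm_num, fun δ hδ yδ hy α hα hle hgt ↦
    hbound T hTnorm w hw δ ⟨hδ.1, hδ.2.trans_lt (by norm_num)⟩ yδ hy α hα hle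
      (hgt (4 * α) (by linarith))⟩
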